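/- Let q be a prime power, let n ≥ 1, let f(x) = Σ_{i=0}^{n−1} a_i x^{q^i} ∈ F_{q^n}[x], and put g(x) = x^{q^n} − x. Then for every 0 ≤ m ≤ n−1, det(D_m(f)) = det(R_{m,q}(f,g)), where in forming R_{m,q}(f,g) the polynomial f is regarded as having q-degree n−1 (with a_{n−1} possibly zero) and g has q-degree n. -/

import Mathlib

/-!
Put `N = n - m = t + 1`. In `R_{m,q}(f,g)`, of size `2t + 1`, the last `t` rows come from `g` and
hold a `1` in column `r` and a `-1` in column `n + r` (when that column exists). Cyclically moving
the first `t` columns to the right end is an even permutation, since the size is odd, and gives a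
block matrix `[B, A; E, 1]`, whose determinant is `det (B - A * E)`. Subtracting `A * E` adds to
column `c` of `B` the column `c - m - 1` of `A`, which is the wrap-around of the indices of `a`
modulo `n`; hence `B - A * E` is `D_m(f)` with the order of rows and columns reversed.
-/

/-- `D_m(f)`: the `(n-m) × (n-m)` matrix obtained from the Dickson matrix of
`f = ∑_{i=0}^{n-1} a_i x^{q^i}` by removing its first `m` columns and last `m` rows;
entry `(i,j)` is `a_((j+m-i) mod n) ^ (q ^ i)`. -/
noncomputable def dickSub (q n m : ℕ) {F : Type*} [Field F] (a : ℕ → F) :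
    Matrix (Fin (n - m)) (Fin (n - m)) F :=
  Matrix.of fun i j => a ((j.val + m + n - i.val) % n) ^ q ^ i.val

/-- The `m`-th scalar `q`-subresultant matrix `R_{m,q}(f,g)` of the `q`-polynomials
`f = ∑_{i=0}^k a_i x^{q^i}` and `g = ∑_{i=0}^l b_i x^{q^i}`. -/
noncomputable def Rmat (q k l m : ℕ) {F : Type*} [Field F] (a b : ℕ → F) :
    Matrix (Fin (k + l - 2 * m)) (Fin (k + l - 2 * m)) F :=
  Matrix.of fun i j =>
    if i.val < l - m then
      if i.val ≤ j.val ∧ j.val ≤ k + i.val then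
        a (k + i.val - j.val) ^ q ^ (l - m - 1 - i.val) else 0
    else
      if i.val - (l - m) ≤ j.val ∧ j.val ≤ l + (i.val - (l - m)) then
        b (l + (i.val - (l - m)) - j.val) ^ q ^ (k - m - 1 - (i.val - (l - m))) else 0

theorem finRotate_pow_apply (s t : ℕ) (x : Fin (s + 1)) :
    ((finRotate (s + 1)) ^ t) x = x + (Fin.ofNat (s + 1) t) := by
  induction t with
  | zero => simp
  | succ t ih =>
    rw [pow_succ', Equiv.Perm.mul_apply, ih, finRotate_apply]
    ext
    simp [Fin.val_add, Nat.add_assoc]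

/-- A rotation of an odd number of points is an even permutation, so rotating the columns of a
matrix of odd size leaves its determinant unchanged. -/
theorem det_rotate_columns {F : Type*} [Field F] (t : ℕ)
    (M : Matrix (Fin (t + 1 + t)) (Fin (t + 1 + t)) F) :
    ∃ ρ : Equiv.Perm (Fin (t + 1 + t)), (∀ x, (ρ x).val = (x.val + t) % (t + 1 + t)) ∧
      (M.submatrix id ρ).det = M.det := by
  have h : t + 1 + t = 2 * t + 1 := by omega
  generalize t + 1 + t = s at h M ⊢
  subst h
  refine ⟨(finRotate (2 * t + 1)) ^ t, fun x => ?_, ?_⟩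
  · rw [finRotate_pow_apply, Fin.val_add]
    simp
  · rw [Matrix.det_permute', map_pow, sign_finRotate]
    simp

/-- The determinant identity over any field, with `n = m + t + 1`; of the coefficients `b` only
the values of their `q ^ s`-th powers matter. -/
theorem stmt_6_aux {F : Type*} [Field F] (q m t : ℕ) (a b : ℕ → F)
    (hb1 : ∀ s, b (m + t + 1) ^ q ^ s = 1) (hb0 : ∀ s, b 0 ^ q ^ s = -1)
    (hb : ∀ u, u ≠ 0 → u ≠ m + t + 1 → ∀ s, b u ^ q ^ s = 0) :
    (dickSub q (m + t + 1) m a).det = (Rmat q (m + t + 1 - 1) (m + t + 1) m a b).det := by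
  have hs : t + 1 + t = m + t + 1 - 1 + (m + t + 1) - 2 * m := by omega
  have hN : t + 1 = m + t + 1 - m := by omega
  rw [← Matrix.det_submatrix_equiv_self (finCongr hs)]
  obtain ⟨ρ, hρ, hdet⟩ := det_rotate_columns t ((Rmat q (m + t + 1 - 1) (m + t + 1) m a b).submatrix
    (finCongr hs) (finCongr hs))
  rw [← hdet, ← Matrix.det_submatrix_equiv_self (finSumFinEquiv (m := t + 1) (n := t)),
    ← Matrix.det_submatrix_equiv_self (Fin.revPerm.trans (finCongr hN))]
  have hl : ∀ c : Fin (t + 1), (ρ (Fin.castAdd t c)).val = t + c.val := by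
    intro c
    rw [hρ, Fin.val_castAdd, Nat.mod_eq_of_lt (by omega)]
    omega
  have hr : ∀ r : Fin t, (ρ (Fin.natAdd (t + 1) r)).val = r.val := by
    intro r
    rw [hρ, Fin.val_natAdd,
      show t + 1 + r.val + t = r.val + (t + 1 + t) by omega, Nat.add_mod_right,
      Nat.mod_eq_of_lt (by omega)]
  have key : ∀ {u v x y : ℕ}, u = v → x = y → a u ^ q ^ x = a v ^ q ^ y := by
    rintro u v x y rfl rfl
    rfl
  -- The blocks: `B` and `A` are the right and left column blocks of the rows of `f`,
  -- and `E` is the right column block of the rows of `g`.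
  let B : Matrix (Fin (t + 1)) (Fin (t + 1)) F := Matrix.of fun i c =>
    if c.val ≤ m + i.val then a (m + i.val - c.val) ^ q ^ (t - i.val) else 0
  let A : Matrix (Fin (t + 1)) (Fin t) F := Matrix.of fun i r =>
    if i.val ≤ r.val then a (m + t + i.val - r.val) ^ q ^ (t - i.val) else 0
  let E : Matrix (Fin t) (Fin (t + 1)) F := Matrix.of fun r c =>
    if c.val = m + 1 + r.val then -1 else 0
  have hblock : (((Rmat q (m + t + 1 - 1) (m + t + 1) m a b).submatrix (finCongr hs)
      (finCongr hs)).submatrix id ρ).submatrix (finSumFinEquiv (m := t + 1) (n := t))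
        (finSumFinEquiv (m := t + 1) (n := t)) = Matrix.fromBlocks B A E 1 := by
    ext i j
    rcases i with i | i <;> rcases j with j | j
    · simp only [Matrix.submatrix_apply, Rmat, Matrix.of_apply, finCongr_apply, Fin.val_cast, hl,
        id, finSumFinEquiv_apply_left, Fin.val_castAdd, Matrix.fromBlocks_apply₁₁, B]
      rw [if_pos (by omega)]
      refine if_ctx_congr (by omega) (fun h => ?_) (fun _ => rfl)
      exact key (by omega) (by omega)
    · simp only [Matrix.submatrix_apply, Rmat, Matrix.of_apply, finCongr_apply, Fin.val_cast, hr,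
        id, finSumFinEquiv_apply_left, finSumFinEquiv_apply_right, Fin.val_castAdd,
        Matrix.fromBlocks_apply₁₂, A]
      rw [if_pos (by omega)]
      refine if_ctx_congr (by omega) (fun h => ?_) (fun _ => rfl)
      exact key (by omega) (by omega)
    · simp only [Matrix.submatrix_apply, Rmat, Matrix.of_apply, finCongr_apply, Fin.val_cast, hl,
        id, finSumFinEquiv_apply_left, finSumFinEquiv_apply_right, Fin.val_natAdd,
        Matrix.fromBlocks_apply₂₁, E]
      rw [if_neg (by omega)]
      by_cases h : j.val = m + 1 + i.val
      · rw [if_pos h, if_pos (by omega)]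
        convert hb0 _ using 3
        omega
      · rw [if_neg h]
        split_ifs with h'
        · exact hb _ (by omega) (by omega) _
        · rfl
    · simp only [Matrix.submatrix_apply, Rmat, Matrix.of_apply, finCongr_apply, Fin.val_cast, hr,
        id, finSumFinEquiv_apply_right, Fin.val_natAdd, Matrix.fromBlocks_apply₂₂,
        Matrix.one_apply, Fin.ext_iff]
      rw [if_neg (by omega)]
      by_cases h : i.val = j.val
      · rw [if_pos h, if_pos (by omega)]
        convert hb1 _ using 3
        omega
      · rw [if_neg h]
        split_ifs with h'
        · exact hb _ (by omega) (by omega) _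
        · rfl
  rw [hblock, Matrix.det_fromBlocks_one₂₂]
  congr 1
  ext i c
  simp only [Matrix.submatrix_apply, dickSub, Matrix.of_apply, Equiv.trans_apply, finCongr_apply,
    Fin.val_cast, Fin.revPerm_apply, Fin.val_rev, Matrix.sub_apply, Matrix.mul_apply, A, B, E]
  by_cases hc : c.val ≤ m + i.val
  -- No wrap-around: every term of `A * E` vanishes.
  · rw [if_pos hc, Finset.sum_eq_zero, sub_zero]
    · rw [show t + 1 - (c.val + 1) + m + (m + t + 1) - (t + 1 - (i.val + 1))
          = m + i.val - c.val + (m + t + 1) by omega, Nat.add_mod_right,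
        Nat.mod_eq_of_lt (by omega)]
      congr 2
      omega
    · intro r _
      by_cases h : i.val ≤ r.val
      · rw [if_neg (show ¬ c.val = m + 1 + r.val by omega), mul_zero]
      · rw [if_neg h, zero_mul]
  · rw [if_neg hc, Finset.sum_eq_single (⟨c.val - m - 1, by omega⟩ : Fin t)]
    · rw [if_pos (by simp only; omega), if_pos (by simp only; omega), mul_neg_one, zero_sub,
        neg_neg, Nat.mod_eq_of_lt (by omega)]
      exact key (by simp only; omega) (by omega)
    · intro r _ hne
      rw [if_neg (show ¬ c.val = m + 1 + r.val from fun h => hne (Fin.ext (by simp only; omega))),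
        mul_zero]
    · simp

/-- Lemma: for `f = ∑_{i=0}^{n-1} a_i x^{q^i} ∈ F_{q^n}[x]` (regarded as having `q`-degree
`n-1`) and `g(x) = x^{q^n} - x` (coefficients `b_n = 1`, `b_0 = -1`, else `0`), one has
`det D_m(f) = det R_{m,q}(f,g)` for all `0 ≤ m ≤ n-1`. -/
theorem stmt_6 (p e q n m : ℕ) (hp : p.Prime) (he : 0 < e) (hq : q = p ^ e)
    (hn : 0 < n) (hm : m ≤ n - 1)
    (F : Type*) [Field F] [Fintype F] (hF : Fintype.card F = q ^ n)
    (a : ℕ → F) :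
    (dickSub q n m a).det =
      (Rmat q (n - 1) n m a (fun t => if t = n then 1 else if t = 0 then -1 else 0)).det := by
  obtain ⟨t, rfl⟩ : ∃ t, n = m + t + 1 := ⟨n - 1 - m, by omega⟩
  have : Fact p.Prime := ⟨hp⟩
  have hq0 : ∀ s, q ^ s ≠ 0 := fun s => by
    rw [hq]
    exact pow_ne_zero _ (pow_ne_zero _ hp.ne_zero)
  have hchar : CharP F p := by
    refine charP_of_card_eq_prime_pow (f := e * (m + t + 1)) ?_
    rw [hF, hq, pow_mul]
  refine stmt_6_aux q m t a _ (fun s => ?_) (fun s => ?_) (fun u h0 h1 s => ?_)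
  · simp
  -- `q ^ s` is a power of the characteristic `p`, so `(-1) ^ q ^ s = -1` even when `p = 2`.
  · rw [if_neg (by omega), if_pos rfl, hq, ← pow_mul]
    exact neg_one_pow_char_pow ..
  · rw [if_neg h1, if_neg h0, zero_pow (hq0 s)]
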